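/- arXiv:1504.07377 — 8 statements merged into one kernel-verified Lean document; each statement's English description precedes it below -/
import Mathlib

section
/- If (u, v) ∈ E and v ∈ s₁ᵘ, then every vertex z ∉ {u, v} satisfying z <₂ u and z <₃ u also satisfies v <₁ z. -/
/-- Sector 1 of `u`: `v ∈ s₁ᵘ` iff `u <₁ v`, `v <₂ u`, `v <₃ u`. -/
def Sect1 {V : Type*} (lt : Fin 3 → V → V → Prop) (u v : V) : Prop :=
  lt 0 u v ∧ lt 1 v u ∧ lt 2 v u

/-- Sector 2 of `u`: `v ∈ s₂ᵘ` iff `u <₁ v`, `u <₂ v`, `v <₃ u`. -/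
def Sect2 {V : Type*} (lt : Fin 3 → V → V → Prop) (u v : V) : Prop :=
  lt 0 u v ∧ lt 1 u v ∧ lt 2 v u

/-- Sector 3 of `u`: `v ∈ s₃ᵘ` iff `v <₁ u`, `u <₂ v`, `v <₃ u`. -/
def Sect3 {V : Type*} (lt : Fin 3 → V → V → Prop) (u v : V) : Prop :=
  lt 0 v u ∧ lt 1 u v ∧ lt 2 v u

/-- Sector 4 of `u`: `v ∈ s₄ᵘ` iff `v <₁ u`, `u <₂ v`, `u <₃ v`. -/
def Sect4 {V : Type*} (lt : Fin 3 → V → V → Prop) (u v : V) : Prop :=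
  lt 0 v u ∧ lt 1 u v ∧ lt 2 u v

/-- Sector 5 of `u`: `v ∈ s₅ᵘ` iff `v <₁ u`, `v <₂ u`, `u <₃ v`. -/
def Sect5 {V : Type*} (lt : Fin 3 → V → V → Prop) (u v : V) : Prop :=
  lt 0 v u ∧ lt 1 v u ∧ lt 2 u v

/-- Sector 6 of `u`: `v ∈ s₆ᵘ` iff `u <₁ v`, `v <₂ u`, `u <₃ v`. -/
def Sect6 {V : Type*} (lt : Fin 3 → V → V → Prop) (u v : V) : Prop :=
  lt 0 u v ∧ lt 1 v u ∧ lt 2 u v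

/-- `Sector lt j u v` means `v ∈ s_{j+1}ᵘ` (sectors indexed by `Fin 6`). -/
def Sector {V : Type*} (lt : Fin 3 → V → V → Prop) : Fin 6 → V → V → Prop
  | 0 => Sect1 lt
  | 1 => Sect2 lt
  | 2 => Sect3 lt
  | 3 => Sect4 lt
  | 4 => Sect5 lt
  | 5 => Sect6 lt

/-- `SectOdd lt i u v` means `v ∈ s_{2(i+1)-1}ᵘ`, i.e. the odd sectors `s₁ᵘ, s₃ᵘ, s₅ᵘ`. -/
def SectOdd {V : Type*} (lt : Fin 3 → V → V → Prop) : Fin 3 → V → V → Prop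
  | 0 => Sect1 lt
  | 1 => Sect3 lt
  | 2 => Sect5 lt

theorem stmt_2 {V : Type*} [Fintype V] (E : V → V → Prop) (lt : Fin 3 → V → V → Prop)
    (hsym : ∀ x y : V, E x y → E y x)
    (hlt : ∀ i, IsStrictTotalOrder V (lt i))
    (ha : ∀ x y : V, x ≠ y → ¬ ∀ i, lt i x y)
    (hb : ∀ x y z : V, E x y → z ≠ x → z ≠ y → ∃ i, lt i x z ∧ lt i y z)
    (u v : V) (huv : E u v) (hv : Sect1 lt u v) :
    ∀ z : V, z ≠ u → z ≠ v → lt 1 z u → lt 2 z u → lt 0 v z := by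
  intro z hzu hzv h1 h2
  -- The edge condition gives an order placing `z` above both ends; orders 1 and 2 place `z` below `u`.
  obtain ⟨i, hui, hvi⟩ := hb u v z huv hzu hzv
  have := hlt i
  fin_cases i
  · exact hvi
  · exact (asymm_of (lt 1) h1 hui).elim
  · exact (asymm_of (lt 2) h2 hui).elim
end

section
/- Each vertex u has at most one neighbor in each of its odd sectors: for each i ∈ {1, 2, 3}, if (u, v) ∈ E and (u, w) ∈ E with both v and w in s₍₂ᵢ₋₁₎ᵘ, then v = w. -/
/-- The members of the odd sector with index `i` lie above `u` in the order `i` only. -/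
lemma SectOdd.eq_of_lt {V : Type*} {lt : Fin 3 → V → V → Prop}
    (hlt : ∀ i, IsStrictTotalOrder V (lt i)) {i j : Fin 3} {u v : V}
    (hv : SectOdd lt i u v) (huv : lt j u v) : j = i := by
  have hasymm : ∀ k, lt k u v → ¬ lt k v u := fun k h h' =>
    (hlt k).irrefl u ((hlt k).trans _ _ _ h h')
  fin_cases i <;> fin_cases j <;> simp_all [SectOdd, Sect1, Sect3, Sect5]

lemma SectOdd.ne {V : Type*} {lt : Fin 3 → V → V → Prop}
    (hlt : ∀ i, IsStrictTotalOrder V (lt i)) {i : Fin 3} {u v : V}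
    (hv : SectOdd lt i u v) : v ≠ u := by
  rintro rfl
  have hirrefl : ∀ k, ¬ lt k v v := fun k => (hlt k).irrefl v
  fin_cases i <;> simp_all [SectOdd, Sect1, Sect3, Sect5]

theorem stmt_5 {V : Type*} [Fintype V] (E : V → V → Prop) (lt : Fin 3 → V → V → Prop)
    (hsym : ∀ x y : V, E x y → E y x)
    (hlt : ∀ i, IsStrictTotalOrder V (lt i))
    (ha : ∀ x y : V, x ≠ y → ¬ ∀ i, lt i x y)
    (hb : ∀ x y z : V, E x y → z ≠ x → z ≠ y → ∃ i, lt i x z ∧ lt i y z)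
    (i : Fin 3) (u v w : V) (huv : E u v) (huw : E u w)
    (hv : SectOdd lt i u v) (hw : SectOdd lt i u w) :
    v = w := by
  by_contra hne
  obtain ⟨j, huw_j, hvw⟩ := hb u v w huv (hw.ne hlt) (Ne.symm hne)
  obtain ⟨k, huv_k, hwv⟩ := hb u w v huw (hv.ne hlt) hne
  obtain rfl := hw.eq_of_lt hlt huw_j
  obtain rfl := hv.eq_of_lt hlt huv_k
  exact (hlt _).irrefl v ((hlt _).trans _ _ _ hvw hwv)
end

section
/- If (u, v) ∈ E and both v ∈ s₁ᵘ and D ∈ s₁ᵘ with D ∉ {u, v}, then D ∉ s₃ᵛ ∪ s₄ᵛ ∪ s₅ᵛ (i.e. D does not satisfy D <₁ v). -/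
theorem stmt_7 {V : Type*} [Fintype V] (E : V → V → Prop) (lt : Fin 3 → V → V → Prop)
    (hsym : ∀ x y : V, E x y → E y x)
    (hlt : ∀ i, IsStrictTotalOrder V (lt i))
    (ha : ∀ x y : V, x ≠ y → ¬ ∀ i, lt i x y)
    (hb : ∀ x y z : V, E x y → z ≠ x → z ≠ y → ∃ i, lt i x z ∧ lt i y z)
    (u v D : V) (huv : E u v) (hv : Sect1 lt u v) (hD : Sect1 lt u D)
    (hDu : D ≠ u) (hDv : D ≠ v) :
    ¬ (Sect3 lt v D ∨ Sect4 lt v D ∨ Sect5 lt v D) := by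
  have asymm : ∀ i x y, lt i x y → ¬ lt i y x := fun i x y hxy hyx =>
    (hlt i).irrefl x ((hlt i).trans x y x hxy hyx)
  have hlow : ¬ lt 0 D v := by
    intro h
    -- Condition (b) for the edge `(u, v)` and `D`: orders 2 and 3 put `D` below `u`,
    -- so only order 1 could put `D` above both endpoints.
    obtain ⟨i, hui, hvi⟩ := hb u v D huv hDu hDv
    fin_cases i
    · exact asymm 0 _ _ h hvi
    · exact asymm 1 _ _ hD.2.1 hui
    · exact asymm 2 _ _ hD.2.2 hui
  rintro (h | h | h) <;> exact hlow h.1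
end

section
/- If (u, v) ∈ E and both v ∈ s₅ᵘ and D ∈ s₅ᵘ with D ∉ {u, v}, then D ∉ s₁ᵛ ∪ s₂ᵛ ∪ s₃ᵛ (i.e. D does not satisfy D <₃ v). -/
theorem stmt_9 {V : Type*} [Fintype V] (E : V → V → Prop) (lt : Fin 3 → V → V → Prop)
    (hsym : ∀ x y : V, E x y → E y x)
    (hlt : ∀ i, IsStrictTotalOrder V (lt i))
    (ha : ∀ x y : V, x ≠ y → ¬ ∀ i, lt i x y)
    (hb : ∀ x y z : V, E x y → z ≠ x → z ≠ y → ∃ i, lt i x z ∧ lt i y z)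
    (u v D : V) (huv : E u v) (hv : Sect5 lt u v) (hD : Sect5 lt u D)
    (hDu : D ≠ u) (hDv : D ≠ v) :
    ¬ (Sect1 lt v D ∨ Sect2 lt v D ∨ Sect3 lt v D) := by
  intro h
  have hDv3 : lt 2 D v := by
    rcases h with h | h | h <;> exact h.2.2
  obtain ⟨h1, h2, -⟩ := hD
  have asymm : ∀ i x y, lt i x y → ¬ lt i y x := fun i x y hxy hyx =>
    have := hlt i
    irrefl_of (lt i) x (trans_of (lt i) hxy hyx)
  -- Condition (b) for the edge `u v` puts `D` above both endpoints in some order, but `D` lies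
  -- below `u` in the first two orders and below `v` in the third.
  obtain ⟨i, hu, hv'⟩ := hb u v D huv hDu hDv
  fin_cases i
  · exact asymm _ _ _ h1 hu
  · exact asymm _ _ _ h2 hu
  · exact asymm _ _ _ hDv3 hv'
end

section
/- Suppose D ∈ s₄ᵘ, suppose v and w are neighbors of u (i.e. (u, v) ∈ E and (u, w) ∈ E) with v ∈ s₃ᵘ and w ∈ s₅ᵘ, suppose D ∉ s₄ᵛ and D ∉ s₄ʷ, and suppose D′ is a neighbor of D (i.e. (D, D′) ∈ E) with D′ ∈ s₁ᴰ and D′ ≠ u. Then D′ ∈ s₄ᵘ; in particular D <₁ D′ <₁ u. -/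
/-- The common form of the two claims `u <₂ D'` (`i = 1`, `j = 2`) and `u <₃ D'` (`i = 2`, `j = 1`,
with `v` in place of `w`). -/
lemma lt_of_neighbor {V : Type*} {E : V → V → Prop} {lt : Fin 3 → V → V → Prop}
    (hlt : ∀ i, IsStrictTotalOrder V (lt i))
    (hb : ∀ x y z : V, E x y → z ≠ x → z ≠ y → ∃ i, lt i x z ∧ lt i y z)
    {i j : Fin 3} (hij : ∀ k, k = 0 ∨ k = i ∨ k = j) {u w D D' : V}
    (huDi : lt i u D) (huw : E u w) (hwi : lt i w u)
    (hnw : ¬ (lt 0 D w ∧ lt i w D ∧ lt j w D))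
    (hDD' : E D D') (h0 : lt 0 D D') (hj : lt j D' D)
    (hD'u : D' ≠ u) (hD'0 : lt 0 D' u) : lt i u D' := by
  have asymm : ∀ k {x y : V}, lt k x y → ¬ lt k y x := fun k _ _ h h' =>
    (hlt k).irrefl _ ((hlt k).trans _ _ _ h h')
  have total : ∀ k {x y : V}, x ≠ y → ¬ lt k x y → lt k y x := fun k x y hne h => by
    by_contra h'
    exact hne ((hlt k).trichotomous x y h h')
  have hwD : lt i w D := (hlt i).trans _ _ _ hwi huDi
  by_contra hcon
  have hD'i : lt i D' u := total i hD'u.symm hcon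
  have hD'w : D' ≠ w := by
    rintro rfl
    exact hnw ⟨h0, hwD, hj⟩
  have hwD' : lt j w D' := by
    obtain ⟨k, hk, hk'⟩ := hb u w D' huw hD'u hD'w
    rcases hij k with rfl | rfl | rfl
    · exact absurd hk (asymm _ hD'0)
    · exact absurd hk hcon
    · exact hk'
  have hwDj : lt j w D := (hlt j).trans _ _ _ hwD' hj
  have hwne : w ≠ D := by
    rintro rfl
    exact asymm _ hwD hwD
  have hw0 : lt 0 w D := total 0 hwne.symm fun h => hnw ⟨h, hwD, hwDj⟩
  obtain ⟨k, hk, -⟩ := hb D D' w hDD' hwne hD'w.symm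
  rcases hij k with rfl | rfl | rfl
  · exact asymm _ hw0 hk
  · exact asymm _ hwD hk
  · exact asymm _ hwDj hk

theorem stmt_12 {V : Type*} [Fintype V] (E : V → V → Prop) (lt : Fin 3 → V → V → Prop)
    (hsym : ∀ x y : V, E x y → E y x)
    (hlt : ∀ i, IsStrictTotalOrder V (lt i))
    (ha : ∀ x y : V, x ≠ y → ¬ ∀ i, lt i x y)
    (hb : ∀ x y z : V, E x y → z ≠ x → z ≠ y → ∃ i, lt i x z ∧ lt i y z)
    (u v w D D' : V) (hD : Sect4 lt u D)
    (huv : E u v) (huw : E u w) (hv : Sect3 lt u v) (hw : Sect5 lt u w)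
    (hnv : ¬ Sect4 lt v D) (hnw : ¬ Sect4 lt w D)
    (hDD' : E D D') (hD' : Sect1 lt D D') (hD'u : D' ≠ u) :
    Sect4 lt u D' ∧ lt 0 D D' ∧ lt 0 D' u := by
  obtain ⟨hD0, hD1, hD2⟩ := hD
  obtain ⟨h0, h1, h2⟩ := hD'
  have asymm : ∀ k {x y : V}, lt k x y → ¬ lt k y x := fun k _ _ h h' =>
    (hlt k).irrefl _ ((hlt k).trans _ _ _ h h')
  have hD'0 : lt 0 D' u := by
    have huD : u ≠ D := by
      rintro rfl
      exact asymm _ hD0 hD0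
    obtain ⟨k, hk, hk'⟩ := hb D D' u hDD' huD hD'u.symm
    fin_cases k
    · exact hk'
    · exact absurd hk (asymm _ hD1)
    · exact absurd hk (asymm _ hD2)
  refine ⟨⟨hD'0, ?_, ?_⟩, h0, hD'0⟩
  · exact lt_of_neighbor hlt hb (i := 1) (j := 2) (by decide) hD1 huw hw.2.1 hnw
      hDD' h0 h2 hD'u hD'0
  · exact lt_of_neighbor hlt hb (i := 2) (j := 1) (by decide) hD2 huv hv.2.2
      (fun h => hnv ⟨h.1, h.2.2, h.2.1⟩) hDD' h0 h1 hD'u hD'0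
end

section
/- Let u be an internal vertex and D a vertex with D ∈ s₄ᵘ and (u, D) ∉ E. Then there exists a vertex x with (u, x) ∈ E, D ∈ s₄ˣ, and D <₁ x <₁ u. -/
theorem stmt_13 {V : Type*} [Fintype V] (E : V → V → Prop) (lt : Fin 3 → V → V → Prop)
    (hsym : ∀ x y : V, E x y → E y x)
    (hlt : ∀ i, IsStrictTotalOrder V (lt i))
    (ha : ∀ x y : V, x ≠ y → ¬ ∀ i, lt i x y)
    (hb : ∀ x y z : V, E x y → z ≠ x → z ≠ y → ∃ i, lt i x z ∧ lt i y z)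
    (A : Fin 3 → V) (hAinj : Function.Injective A)
    (hAadj : ∀ i j : Fin 3, i ≠ j → E (A i) (A j))
    (hAmax : ∀ i : Fin 3, ∀ x : V, x ≠ A i → lt i x (A i))
    (hAmin : ∀ i j : Fin 3, i ≠ j → ∀ x : V, (∀ k, x ≠ A k) → lt i (A j) x)
    (hmaxi : ∀ x : V, (∀ k, x ≠ A k) → ∀ i : Fin 3, ∃ v, E x v ∧ SectOdd lt i x v)
    (u D : V) (hu : ∀ k, u ≠ A k) (hD : Sect4 lt u D) (hnD : ¬ E u D) :
    ∃ x : V, E u x ∧ Sect4 lt x D ∧ lt 0 D x ∧ lt 0 x u := by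
  have tr : ∀ i {a b c : V}, lt i a b → lt i b c → lt i a c := fun i {a b c} h h' =>
    (hlt i).toIsTrans.trans a b c h h'
  have irr : ∀ i (a : V), ¬ lt i a a := fun i a => (hlt i).toIrrefl.irrefl a
  have asy : ∀ i {a b : V}, lt i a b → ¬ lt i b a := fun i {a b} h h' => irr i a (tr i h h')
  have tot : ∀ i {a b : V}, a ≠ b → lt i a b ∨ lt i b a := fun i {a b} hab => by
    by_contra! h
    exact hab ((hlt i).toTrichotomous.trichotomous a b h.1 h.2)
  have ne : ∀ i {a b : V}, lt i a b → a ≠ b := fun i {a b} h e => irr i a (by rwa [← e] at h)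
  -- A vertex below `D` in `<₂` and `<₃` is above `D` in `<₁`.
  have above : ∀ {D w : V}, lt 1 w D → lt 2 w D → lt 0 D w := fun {D w} h1 h2 => by
    rcases tot 0 (ne 1 h1) with h | h
    · refine absurd (fun i => ?_) (ha w D (ne 1 h1))
      fin_cases i
      exacts [h, h1, h2]
    · exact h
  have wf : WellFounded (fun a b : V => lt 0 b a) := by
    haveI : IsTrans V (fun a b : V => lt 0 b a) := ⟨fun a b c h h' => tr 0 h' h⟩
    haveI : Std.Irrefl (fun a b : V => lt 0 b a) := ⟨fun a => irr 0 a⟩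
    exact Finite.wellFounded_of_trans_of_irrefl _
  induction D using wf.induction with
  | _ D ih =>
  obtain ⟨d0, d1, d2⟩ := hD
  have hDint : ∀ k, D ≠ A k := by
    intro k e
    subst e
    fin_cases k
    · exact asy 0 d0 (hAmax 0 u (hu 0))
    · exact asy 2 d2 (hAmin 2 1 (by decide) u hu)
    · exact asy 1 d1 (hAmin 1 2 (by decide) u hu)
  obtain ⟨v, hDv, v0, v1, v2⟩ := hmaxi D hDint 0
  have huv : v ≠ u := by
    rintro rfl
    exact hnD (hsym _ _ hDv)
  have vu0 : lt 0 v u := by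
    obtain ⟨i, h, h'⟩ := hb D v u hDv (ne 1 d1) huv.symm
    fin_cases i
    · exact h'
    · exact absurd h (asy 1 d1)
    · exact absurd h (asy 2 d2)
  rcases tot 1 huv with h1 | h1
  · -- `v ∈ s₅ᵘ`
    have h2 : lt 2 u v := by
      rcases tot 2 huv with h | h
      · exact absurd vu0 (asy 0 (above h1 h))
      · exact h
    obtain ⟨w, huw, w0, w1, w2⟩ := hmaxi u hu 2
    have wD2 : lt 2 w D := by
      by_cases hwv : v = w
      · exact hwv ▸ v2
      obtain ⟨i, h, h'⟩ := hb u w v huw huv hwv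
      fin_cases i
      · exact absurd h (asy 0 vu0)
      · exact absurd h (asy 1 h1)
      · exact tr 2 h' v2
    have wD1 : lt 1 w D := tr 1 w1 d1
    exact ⟨w, huw, ⟨above wD1 wD2, wD1, wD2⟩, above wD1 wD2, w0⟩
  rcases tot 2 huv with h2 | h2
  · -- `v ∈ s₃ᵘ`
    obtain ⟨w, huw, w0, w1, w2⟩ := hmaxi u hu 1
    have wD1 : lt 1 w D := by
      by_cases hwv : v = w
      · exact hwv ▸ v1
      obtain ⟨i, h, h'⟩ := hb u w v huw huv hwv
      fin_cases i
      · exact absurd h (asy 0 vu0)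
      · exact tr 1 h' v1
      · exact absurd h (asy 2 h2)
    have wD2 : lt 2 w D := tr 2 w2 d2
    exact ⟨w, huw, ⟨above wD1 wD2, wD1, wD2⟩, above wD1 wD2, w0⟩
  · -- `v ∈ s₄ᵘ`
    by_cases huvE : E u v
    · exact ⟨v, huvE, ⟨v0, v1, v2⟩, v0, vu0⟩
    · obtain ⟨x, hux, ⟨x0, x1, x2⟩, -, xu⟩ := ih v v0 ⟨vu0, h1, h2⟩ huvE
      exact ⟨x, hux, ⟨tr 0 v0 x0, tr 1 x1 v1, tr 2 x2 v2⟩, tr 0 v0 x0, xu⟩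
end

section
/- Let u and D be vertices with D ∈ s₁ᵘ. Then there exists a finite path u = u⁰, u¹, …, uᵐ = D in the graph (i.e. (uᵏ, uᵏ⁺¹) ∈ E for all 0 ≤ k < m) such that either the sequence u⁰, …, uᵐ is strictly decreasing with respect to <₂, or it is strictly decreasing with respect to <₃. -/
/-- A standard maximal Schnyder representation, with the three orders `l1 l2 l3` and the corresponding
distinguished vertices `a1 a2 a3` as separate arguments, so that two of the orders can be swapped. -/
structure SchnyderRep {V : Type*} (E : V → V → Prop) (l1 l2 l3 : V → V → Prop) (a1 a2 a3 : V) :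
    Prop where
  symm : ∀ x y, E x y → E y x
  irrefl1 : ∀ x, ¬ l1 x x
  irrefl2 : ∀ x, ¬ l2 x x
  irrefl3 : ∀ x, ¬ l3 x x
  trans1 : ∀ x y z, l1 x y → l1 y z → l1 x z
  trans2 : ∀ x y z, l2 x y → l2 y z → l2 x z
  trans3 : ∀ x y z, l3 x y → l3 y z → l3 x z
  tri1 : ∀ x y, l1 x y ∨ x = y ∨ l1 y x
  tri2 : ∀ x y, l2 x y ∨ x = y ∨ l2 y x
  tri3 : ∀ x y, l3 x y ∨ x = y ∨ l3 y x
  no_dom : ∀ x y, l1 x y → l2 x y → l3 x y → False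
  edge : ∀ x y z, E x y → z ≠ x → z ≠ y → (l1 x z ∧ l1 y z) ∨ (l2 x z ∧ l2 y z) ∨ (l3 x z ∧ l3 y z)
  adj12 : E a1 a2
  adj13 : E a1 a3
  max1 : ∀ x, x ≠ a1 → l1 x a1
  max2 : ∀ x, x ≠ a2 → l2 x a2
  max3 : ∀ x, x ≠ a3 → l3 x a3
  min2 : ∀ x, x ≠ a1 → x ≠ a2 → x ≠ a3 → l2 a1 x ∧ l2 a3 x
  min3 : ∀ x, x ≠ a1 → x ≠ a2 → x ≠ a3 → l3 a1 x ∧ l3 a2 x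
  out1 : ∀ x, x ≠ a1 → x ≠ a2 → x ≠ a3 → ∃ v, E x v ∧ l1 x v ∧ l2 v x ∧ l3 v x
  out2 : ∀ x, x ≠ a1 → x ≠ a2 → x ≠ a3 → ∃ v, E x v ∧ l2 x v ∧ l1 v x ∧ l3 v x
  out3 : ∀ x, x ≠ a1 → x ≠ a2 → x ≠ a3 → ∃ v, E x v ∧ l3 x v ∧ l1 v x ∧ l2 v x

namespace SchnyderRep

variable {V : Type*} {E : V → V → Prop} {l1 l2 l3 : V → V → Prop} {a1 a2 a3 : V}

theorem swap (h : SchnyderRep E l1 l2 l3 a1 a2 a3) : SchnyderRep E l1 l3 l2 a1 a3 a2 where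
  symm := h.symm
  irrefl1 := h.irrefl1
  irrefl2 := h.irrefl3
  irrefl3 := h.irrefl2
  trans1 := h.trans1
  trans2 := h.trans3
  trans3 := h.trans2
  tri1 := h.tri1
  tri2 := h.tri3
  tri3 := h.tri2
  no_dom := fun x y p q r => h.no_dom x y p r q
  edge := fun x y z e p q => by
    rcases h.edge x y z e p q with t | t | t
    · exact Or.inl t
    · exact Or.inr (Or.inr t)
    · exact Or.inr (Or.inl t)
  adj12 := h.adj13
  adj13 := h.adj12
  max1 := h.max1
  max2 := h.max3
  max3 := h.max2
  min2 := fun x p q r => h.min3 x p r q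
  min3 := fun x p q r => h.min2 x p r q
  out1 := fun x p q r => by
    obtain ⟨v, e, i, j, k⟩ := h.out1 x p r q
    exact ⟨v, e, i, k, j⟩
  out2 := fun x p q r => h.out3 x p r q
  out3 := fun x p q r => h.out2 x p r q

theorem wf1 [Finite V] (h : SchnyderRep E l1 l2 l3 a1 a2 a3) :
    WellFounded (fun x y => l1 y x) := by
  have : IsTrans V (fun x y => l1 y x) := ⟨fun a b c p q => h.trans1 c b a q p⟩
  have : Std.Irrefl (fun x y => l1 y x) := ⟨fun a => h.irrefl1 a⟩
  exact Finite.wellFounded_of_trans_of_irrefl _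

theorem wf2 [Finite V] (h : SchnyderRep E l1 l2 l3 a1 a2 a3) :
    WellFounded (fun x y => l2 y x) := by
  have : IsTrans V (fun x y => l2 y x) := ⟨fun a b c p q => h.trans2 c b a q p⟩
  have : Std.Irrefl (fun x y => l2 y x) := ⟨fun a => h.irrefl2 a⟩
  exact Finite.wellFounded_of_trans_of_irrefl _

/-- Position of `D ∈ s₁ᵘ` relative to a neighbour `p` of `u`: it is `p`, or lies
in sector 1, 6 or 2 of `p`. -/
theorem sector_step (h : SchnyderRep E l1 l2 l3 a1 a2 a3) {u p D : V} (e : E u p)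
    (d1 : l1 u D) (d2 : l2 D u) (d3 : l3 D u) :
    D = p ∨ (l1 p D ∧ l2 D p ∧ l3 D p) ∨ (l1 p D ∧ l2 D p ∧ l3 p D) ∨
      (l1 p D ∧ l2 p D ∧ l3 D p) := by
  by_cases hp : D = p
  · exact Or.inl hp
  have hu : D ≠ u := by
    rintro rfl
    exact h.irrefl1 _ d1
  have hpD : l1 p D := by
    rcases h.edge u p D e hu hp with t | t | t
    · exact t.2
    · exact (h.irrefl2 _ (h.trans2 _ _ _ d2 t.1)).elim
    · exact (h.irrefl3 _ (h.trans3 _ _ _ d3 t.1)).elim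
  rcases h.tri2 p D with t2 | t2 | t2
  · rcases h.tri3 p D with t3 | t3 | t3
    · exact (h.no_dom _ _ hpD t2 t3).elim
    · exact (hp t3.symm).elim
    · exact Or.inr (Or.inr (Or.inr ⟨hpD, t2, t3⟩))
  · exact (hp t2.symm).elim
  · rcases h.tri3 p D with t3 | t3 | t3
    · exact Or.inr (Or.inr (Or.inl ⟨hpD, t2, t3⟩))
    · exact (hp t3.symm).elim
    · exact Or.inr (Or.inl ⟨hpD, t2, t3⟩)

/-- Let `(q, r)` be an edge with `r <₁ q`, and suppose that the first-sector
walk has reached a vertex `v` with `v <₃ q` and `r ∈ s₁ᵛ`. Then the walk goes on until it hits `r` or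
until `r` falls into sector 6; it cannot miss `r` on the sector 2 side. The sector 6 case is delegated
to the hypothesis `B`. -/
theorem reach_of_sector1 [Finite V] (h : SchnyderRep E l1 l2 l3 a1 a2 a3) {q r : V} (e : E q r)
    (hrq : l1 r q)
    (B : ∀ w w', E w w' → l1 w w' → l2 w' w → l3 w' w → l1 w r → l2 r w → l3 r w →
      l1 w' r → l2 r w' → l3 w' r → Relation.ReflTransGen (fun x y => E x y ∧ l2 y x) w r)
    (v : V) (v1 : l1 v r) (v2 : l2 r v) (v3 : l3 r v) (vq : l3 v q) :
    Relation.ReflTransGen (fun x y => E x y ∧ l2 y x) v r := by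
  have asymm1 : ∀ x y, l1 x y → l1 y x → False := fun x y p q => h.irrefl1 _ (h.trans1 _ _ _ p q)
  have asymm2 : ∀ x y, l2 x y → l2 y x → False := fun x y p q => h.irrefl2 _ (h.trans2 _ _ _ p q)
  have asymm3 : ∀ x y, l3 x y → l3 y x → False := fun x y p q => h.irrefl3 _ (h.trans3 _ _ _ p q)
  induction v using h.wf1.induction with
  | _ v ih =>
  have r1 : r ≠ a1 := by
    rintro rfl
    by_cases hq : q = r
    · subst hq
      exact h.irrefl1 _ hrq
    · exact asymm1 _ _ hrq (h.max1 q hq)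
  have r2 : r ≠ a2 := by
    rintro rfl
    by_cases hq : v = r
    · subst hq
      exact h.irrefl1 _ v1
    · exact asymm2 _ _ v2 (h.max2 v hq)
  have r3 : r ≠ a3 := by
    rintro rfl
    by_cases hq : v = r
    · subst hq
      exact h.irrefl1 _ v1
    · exact asymm3 _ _ v3 (h.max3 v hq)
  have n1 : v ≠ a1 := by
    rintro rfl
    exact asymm1 _ _ v1 (h.max1 r r1)
  have n2 : v ≠ a2 := by
    rintro rfl
    exact asymm3 _ _ v3 (h.min3 r r1 r2 r3).2
  have n3 : v ≠ a3 := by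
    rintro rfl
    exact asymm2 _ _ v2 (h.min2 r r1 r2 r3).2
  obtain ⟨v', ev, p1, p2, p3⟩ := h.out1 v n1 n2 n3
  rcases h.sector_step ev v1 v2 v3 with t | ⟨t1, t2, t3⟩ | ⟨t1, t2, t3⟩ | ⟨t1, t2, t3⟩
  · subst t
    exact Relation.ReflTransGen.single ⟨ev, p2⟩
  · exact Relation.ReflTransGen.head ⟨ev, p2⟩ (ih v' p1 t1 t2 t3 (h.trans3 _ _ _ p3 vq))
  · exact B v v' ev p1 p2 p3 v1 v2 v3 t1 t2 t3
  · -- In the sector 2 case `v'` violates (b) for the edge `(q, r)`.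
    exfalso
    have vq' : l3 v' q := h.trans3 _ _ _ p3 vq
    rcases h.edge q r v' e (fun c => h.irrefl3 _ (c ▸ vq')) (fun c => h.irrefl1 _ (c ▸ t1))
      with t | t | t
    · exact asymm1 _ _ t.2 t1
    · exact asymm2 _ _ t.2 t2
    · exact asymm3 _ _ t.1 vq'

/-- If `q ∈ s₁ʷ` is overtaken by the edge `w → w'` into `s₁ʷ`, with `q` in sector 6 of `w'`, then there
is a `<₂`-decreasing path from `w` to `q`. It ends with the reversed edge from `q` into its third
sector. -/
theorem reach_of_sector6 [Finite V] (h : SchnyderRep E l1 l2 l3 a1 a2 a3) (q : V) :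
    ∀ w w', E w w' → l1 w w' → l2 w' w → l3 w' w → l1 w q → l2 q w → l3 q w →
      l1 w' q → l2 q w' → l3 w' q → Relation.ReflTransGen (fun x y => E x y ∧ l2 y x) w q := by
  have asymm1 : ∀ x y, l1 x y → l1 y x → False := fun x y p q => h.irrefl1 _ (h.trans1 _ _ _ p q)
  have asymm2 : ∀ x y, l2 x y → l2 y x → False := fun x y p q => h.irrefl2 _ (h.trans2 _ _ _ p q)
  have asymm3 : ∀ x y, l3 x y → l3 y x → False := fun x y p q => h.irrefl3 _ (h.trans3 _ _ _ p q)
  induction q using h.wf2.induction with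
  | _ q ih =>
  intro w w' e p1 p2 p3 w1 w2 w3 s1 s2 s3
  have q2 : q ≠ a2 := by
    rintro rfl
    by_cases hq : w = q
    · subst hq
      exact h.irrefl1 _ w1
    · exact asymm2 _ _ w2 (h.max2 w hq)
  have q3 : q ≠ a3 := by
    rintro rfl
    by_cases hq : w = q
    · subst hq
      exact h.irrefl1 _ w1
    · exact asymm3 _ _ w3 (h.max3 w hq)
  have q1 : q ≠ a1 := by
    rintro rfl
    have n1 : w' ≠ q := fun c => h.irrefl1 _ (c ▸ s1)
    have n2 : w' ≠ a2 := by
      rintro rfl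
      exact asymm2 _ _ p2 (h.max2 w (fun c => h.irrefl1 _ (c ▸ p1)))
    have n3 : w' ≠ a3 := by
      rintro rfl
      exact asymm3 _ _ p3 (h.max3 w (fun c => h.irrefl1 _ (c ▸ p1)))
    exact asymm3 _ _ s3 (h.min3 w' n1 n2 n3).1
  obtain ⟨r, er, r2, r1, r3⟩ := h.out2 q q1 q2 q3
  have last : E r q ∧ l2 q r := ⟨h.symm _ _ er, r2⟩
  by_cases hr : w' = r
  · subst hr
    exact (Relation.ReflTransGen.single ⟨e, p2⟩).tail last
  have rw2 : l2 r w' := by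
    rcases h.edge q r w' er (fun c => h.irrefl1 _ (c ▸ s1)) hr with t | t | t
    · exact (asymm1 _ _ t.1 s1).elim
    · exact t.2
    · exact (asymm3 _ _ t.1 s3).elim
  have rw2' : l2 r w := h.trans2 _ _ _ rw2 p2
  have rw3' : l3 r w := h.trans3 _ _ _ r3 w3
  have hrw : r ≠ w := fun c => h.irrefl2 _ (c ▸ rw2')
  have rw1' : l1 w r := by
    rcases h.tri1 w r with t | t | t
    · exact t
    · exact (hrw t.symm).elim
    · exact (h.no_dom _ _ t rw2' rw3').elim
  rcases h.sector_step e rw1' rw2' rw3' with t | ⟨t1, t2, t3⟩ | ⟨t1, t2, t3⟩ | ⟨t1, t2, t3⟩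
  · exact (hr t.symm).elim
  · exact Relation.ReflTransGen.head ⟨e, p2⟩
      ((h.reach_of_sector1 er r1 (ih r r2) w' t1 t2 t3 s3).tail last)
  · exact (ih r r2 w w' e p1 p2 p3 rw1' rw2' rw3' t1 t2 t3).tail last
  · exact (asymm2 _ _ rw2 t2).elim

theorem reach [Finite V] (h : SchnyderRep E l1 l2 l3 a1 a2 a3) (u D : V)
    (d1 : l1 u D) (d2 : l2 D u) (d3 : l3 D u) :
    Relation.ReflTransGen (fun x y => E x y ∧ l2 y x) u D ∨
      Relation.ReflTransGen (fun x y => E x y ∧ l3 y x) u D := by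
  have asymm1 : ∀ x y, l1 x y → l1 y x → False := fun x y p q => h.irrefl1 _ (h.trans1 _ _ _ p q)
  have asymm2 : ∀ x y, l2 x y → l2 y x → False := fun x y p q => h.irrefl2 _ (h.trans2 _ _ _ p q)
  have asymm3 : ∀ x y, l3 x y → l3 y x → False := fun x y p q => h.irrefl3 _ (h.trans3 _ _ _ p q)
  induction u using h.wf1.induction with
  | _ u ih =>
  have ne : u ≠ D := fun c => h.irrefl1 _ (c ▸ d1)
  have n1 : u ≠ a1 := by
    rintro rfl
    exact asymm1 _ _ d1 (h.max1 D ne.symm)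
  have D2 : D ≠ a2 := by
    rintro rfl
    exact asymm2 _ _ d2 (h.max2 u ne)
  have D3 : D ≠ a3 := by
    rintro rfl
    exact asymm3 _ _ d3 (h.max3 u ne)
  by_cases n2 : u = a2
  · subst n2
    by_cases D1 : D = a1
    · subst D1
      exact Or.inl (Relation.ReflTransGen.single ⟨h.symm _ _ h.adj12, d2⟩)
    · exact (asymm3 _ _ d3 (h.min3 D D1 D2 D3).2).elim
  by_cases n3 : u = a3
  · subst n3
    by_cases D1 : D = a1
    · subst D1
      exact Or.inl (Relation.ReflTransGen.single ⟨h.symm _ _ h.adj13, d2⟩)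
    · exact (asymm2 _ _ d2 (h.min2 D D1 D2 D3).2).elim
  obtain ⟨p, e, p1, p2, p3⟩ := h.out1 u n1 n2 n3
  rcases h.sector_step e d1 d2 d3 with t | ⟨t1, t2, t3⟩ | ⟨t1, t2, t3⟩ | ⟨t1, t2, t3⟩
  · subst t
    exact Or.inl (Relation.ReflTransGen.single ⟨e, p2⟩)
  · exact (ih p p1 t1 t2 t3).imp (Relation.ReflTransGen.head ⟨e, p2⟩)
      (Relation.ReflTransGen.head ⟨e, p3⟩)
  · exact Or.inl (h.reach_of_sector6 D u p e p1 p2 p3 d1 d2 d3 t1 t2 t3)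
  · exact Or.inr (h.swap.reach_of_sector6 D u p e p1 p3 p2 d1 d3 d2 t1 t3 t2)

end SchnyderRep

theorem exists_path_of_reflTransGen {V : Type*} {E l : V → V → Prop}
    (tr : ∀ x y z, l x y → l y z → l x z) {u D : V}
    (H : Relation.ReflTransGen (fun x y => E x y ∧ l y x) u D) :
    ∃ (m : ℕ) (p : Fin (m + 1) → V), p 0 = u ∧ p (Fin.last m) = D ∧
      (∀ k : Fin m, E (p k.castSucc) (p k.succ)) ∧
      (∀ j k : Fin (m + 1), j < k → l (p k) (p j)) := by
  induction H using Relation.ReflTransGen.head_induction_on with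
  | refl =>
    refine ⟨0, fun _ => D, rfl, rfl, fun k => k.elim0, fun j k hjk => ?_⟩
    exact absurd hjk (by omega)
  | @head a c hac _ ih =>
    obtain ⟨m, p, h0, hl, hE, hd⟩ := ih
    refine ⟨m + 1, Fin.cons a p, rfl, ?_, ?_, ?_⟩
    · rw [← Fin.succ_last, Fin.cons_succ, hl]
    · intro k
      refine Fin.cases ?_ (fun k => ?_) k
      · simpa [h0] using hac.1
      · rw [← Fin.succ_castSucc, Fin.cons_succ, Fin.cons_succ]
        exact hE k
    · intro j k
      refine Fin.cases ?_ (fun k => ?_) k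
      · intro hj
        exact absurd hj (Fin.not_lt_zero j)
      · refine Fin.cases ?_ (fun j => ?_) j
        · intro _
          rw [Fin.cons_succ, Fin.cons_zero]
          by_cases hk : k = 0
          · subst hk
            rw [h0]
            exact hac.2
          · have := hd 0 k (Fin.pos_of_ne_zero hk)
            rw [h0] at this
            exact tr _ _ _ this hac.2
        · intro hjk
          rw [Fin.cons_succ, Fin.cons_succ]
          exact hd j k (Fin.succ_lt_succ_iff.mp hjk)

theorem stmt_17 {V : Type*} [Fintype V] (E : V → V → Prop) (lt : Fin 3 → V → V → Prop)
    (hsym : ∀ x y : V, E x y → E y x)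
    (hlt : ∀ i, IsStrictTotalOrder V (lt i))
    (ha : ∀ x y : V, x ≠ y → ¬ ∀ i, lt i x y)
    (hb : ∀ x y z : V, E x y → z ≠ x → z ≠ y → ∃ i, lt i x z ∧ lt i y z)
    (A : Fin 3 → V) (hAinj : Function.Injective A)
    (hAadj : ∀ i j : Fin 3, i ≠ j → E (A i) (A j))
    (hAmax : ∀ i : Fin 3, ∀ x : V, x ≠ A i → lt i x (A i))
    (hAmin : ∀ i j : Fin 3, i ≠ j → ∀ x : V, (∀ k, x ≠ A k) → lt i (A j) x)
    (hmaxi : ∀ x : V, (∀ k, x ≠ A k) → ∀ i : Fin 3, ∃ v, E x v ∧ SectOdd lt i x v)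
    (u D : V) (hD : Sect1 lt u D) :
    ∃ (m : ℕ) (p : Fin (m + 1) → V), p 0 = u ∧ p (Fin.last m) = D ∧
      (∀ k : Fin m, E (p k.castSucc) (p k.succ)) ∧
      ((∀ j k : Fin (m + 1), j < k → lt 1 (p k) (p j)) ∨
       (∀ j k : Fin (m + 1), j < k → lt 2 (p k) (p j))) := by
  have irr : ∀ i x, ¬ lt i x x := fun i x => (hlt i).irrefl x
  have tr : ∀ i x y z, lt i x y → lt i y z → lt i x z := fun i x y z => (hlt i).trans x y z
  have tri : ∀ i x y, lt i x y ∨ x = y ∨ lt i y x := fun i x y => by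
    have := hlt i
    exact trichotomous_of (lt i) x y
  have int : ∀ x, x ≠ A 0 → x ≠ A 1 → x ≠ A 2 → ∀ k, x ≠ A k := fun x p q r k => by
    fin_cases k
    exacts [p, q, r]
  have h : SchnyderRep E (lt 0) (lt 1) (lt 2) (A 0) (A 1) (A 2) :=
    { symm := hsym
      irrefl1 := irr 0
      irrefl2 := irr 1
      irrefl3 := irr 2
      trans1 := tr 0
      trans2 := tr 1
      trans3 := tr 2
      tri1 := tri 0
      tri2 := tri 1
      tri3 := tri 2
      no_dom := fun x y p q r => ha x y (fun c => irr 0 _ (c ▸ p)) (fun i => by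
        fin_cases i
        exacts [p, q, r])
      edge := fun x y z e p q => by
        obtain ⟨i, hi⟩ := hb x y z e p q
        fin_cases i
        exacts [Or.inl hi, Or.inr (Or.inl hi), Or.inr (Or.inr hi)]
      adj12 := hAadj 0 1 (by decide)
      adj13 := hAadj 0 2 (by decide)
      max1 := hAmax 0
      max2 := hAmax 1
      max3 := hAmax 2
      min2 := fun x p q r => ⟨hAmin 1 0 (by decide) x (int x p q r), hAmin 1 2 (by decide) x (int x p q r)⟩
      min3 := fun x p q r => ⟨hAmin 2 0 (by decide) x (int x p q r), hAmin 2 1 (by decide) x (int x p q r)⟩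
      out1 := fun x p q r => by
        obtain ⟨v, e, i, j, k⟩ := hmaxi x (int x p q r) 0
        exact ⟨v, e, i, j, k⟩
      out2 := fun x p q r => by
        obtain ⟨v, e, i, j, k⟩ := hmaxi x (int x p q r) 1
        exact ⟨v, e, j, i, k⟩
      out3 := fun x p q r => by
        obtain ⟨v, e, i, j, k⟩ := hmaxi x (int x p q r) 2
        exact ⟨v, e, k, i, j⟩ }
  rcases h.reach u D hD.1 hD.2.1 hD.2.2 with H | H
  · obtain ⟨m, p, h0, hl, hE, hd⟩ := exists_path_of_reflTransGen (tr 1) H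
    exact ⟨m, p, h0, hl, hE, Or.inl hd⟩
  · obtain ⟨m, p, h0, hl, hE, hd⟩ := exists_path_of_reflTransGen (tr 2) H
    exact ⟨m, p, h0, hl, hE, Or.inr hd⟩
end

section
/- For any two distinct vertices u and D of V, there exists a greedy path from u to D: a finite path u = u⁰, u¹, …, uᵐ = D in the graph (i.e. (uᵏ, uᵏ⁺¹) ∈ E for all 0 ≤ k < m) and an index i ∈ {1, 2, 3} such that the sequence u⁰, …, uᵐ is strictly monotone (strictly increasing, or strictly decreasing) with respect to <ᵢ. -/
open Relation

/-- The step relation of paths in the graph `E` that strictly decrease the rank `f`. -/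
def DecStep {V : Type*} (E : V → V → Prop) (f : V → ℕ) (x y : V) : Prop :=
  E x y ∧ f y < f x

/-- `Climbs E f g h I`: every vertex of `I` has a neighbour that is larger for `f` and smaller for
`g` and `h` (a parent in the tree belonging to `f`), which lies in `I` or is the maximum of `f`. -/
def Climbs {V : Type*} (E : V → V → Prop) (f g h : V → ℕ) (I : V → Prop) : Prop :=
  ∀ x, I x → ∃ v, E x v ∧ f x < f v ∧ g v < g x ∧ h v < h x ∧ (I v ∨ ∀ y, f y ≤ f v)

/-- The two paths of the zigzag meet; `f`, `g`, `h` are the ranks of `<₁`, `<₂`, `<₃`. The first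
alternative for `(v, w)` says `w ∈ s₁ᵛ`, where `w` was reached along an edge from some `w'` with
`v <₂ w'`; the second says `w ∈ s₂ᵛ`, where `v` was reached along an edge from some `v'` with
`w <₂ v'`. -/
lemma greedy_zigzag {V : Type*} (E : V → V → Prop) (f g h : V → ℕ) (I : V → Prop)
    (hsym : ∀ x y, E x y → E y x)
    (hf : f.Injective) (hg : g.Injective) (hh : h.Injective)
    (ha : ∀ x y, x ≠ y → ¬ (f x < f y ∧ g x < g y ∧ h x < h y))
    (hb : ∀ x y z, E x y → z ≠ x → z ≠ y →
      (f x < f z ∧ f y < f z) ∨ (g x < g z ∧ g y < g z) ∨ (h x < h z ∧ h y < h z))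
    (hPf : Climbs E f g h I) (hPh : Climbs E h f g I) :
    ∀ n v w, h v - h w ≤ n → h w < h v → f v < f w → (I v ∨ ∀ y, f y ≤ f v) →
      (I w ∨ ∀ y, h y ≤ h w) →
      ((g w < g v ∧ ∃ w', E w' w ∧ g v < g w') ∨ (g v < g w ∧ ∃ v', E v' v ∧ g w < g v')) →
      ReflTransGen (DecStep E h) v w := by
  intro n
  induction n with
  | zero => intro v w h1 h2; omega
  | succ n ih =>
    intro v w hn hvw hfvw hIv hIw hst
    rcases hst with ⟨hgwv, w', hEw, hgw'⟩ | ⟨hgvw, v', hEv, hgv'⟩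
    · have hv : I v := hIv.resolve_right fun hm => by have := hm w; omega
      obtain ⟨v₁, hE, hf₁, hg₁, hh₁, hI₁⟩ := hPf v hv
      refine ReflTransGen.head (b := v₁) ⟨hE, hh₁⟩ ?_
      rcases eq_or_ne v₁ w with rfl | hne
      · exact .refl
      have hf₂ : f v₁ < f w := by
        rcases hb v v₁ w hE (by rintro rfl; omega) hne.symm with h' | h' | h' <;> omega
      have hgne := hg.ne hne
      have hhne := hh.ne hne
      have hh₂ : h w < h v₁ := by
        by_contra hcon
        have hg₂ : g w < g v₁ := by
          have := ha v₁ w hne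
          omega
        rcases hb w' w v₁ hEw (by rintro rfl; omega) hne with h' | h' | h' <;> omega
      refine ih v₁ w (by omega) hh₂ hf₂ hI₁ hIw ?_
      rcases lt_or_gt_of_ne hgne with hlt | hgt
      · exact .inr ⟨hlt, v, hE, hgwv⟩
      · exact .inl ⟨hgt, w', hEw, by omega⟩
    · have hw : I w := hIw.resolve_right fun hm => by have := hm v; omega
      obtain ⟨w₁, hE, hh₁, hf₁, hg₁, hI₁⟩ := hPh w hw
      refine ReflTransGen.tail (b := w₁) ?_ ⟨hsym _ _ hE, hh₁⟩
      rcases eq_or_ne w₁ v with rfl | hne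
      · exact .refl
      have hh₂ : h w₁ < h v := by
        rcases hb w w₁ v hE (by rintro rfl; omega) hne.symm with h' | h' | h' <;> omega
      have hgne := hg.ne hne
      have hfne := hf.ne hne
      have hf₂ : f v < f w₁ := by
        by_contra hcon
        have hg₂ : g v < g w₁ := by
          have := ha w₁ v hne
          omega
        rcases hb v' v w₁ hEv (by rintro rfl; omega) hne with h' | h' | h' <;> omega
      refine ih v w₁ (by omega) hh₂ hf₂ hIv hI₁ ?_
      rcases lt_or_gt_of_ne hgne with hlt | hgt
      · exact .inl ⟨hlt, w, hE, hgvw⟩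
      · exact .inr ⟨hgt, v', hEv, by omega⟩

/-- If `D` lies in the odd sector of `u` belonging to `f`, there is a path from `u` to `D` that is
decreasing in one of the other two orders. -/
lemma greedy_of_odd_sector {V : Type*} (E : V → V → Prop) (f g h : V → ℕ) (I : V → Prop)
    (hsym : ∀ x y, E x y → E y x)
    (hf : f.Injective) (hg : g.Injective) (hh : h.Injective)
    (ha : ∀ x y, x ≠ y → ¬ (f x < f y ∧ g x < g y ∧ h x < h y))
    (hb : ∀ x y z, E x y → z ≠ x → z ≠ y →
      (f x < f z ∧ f y < f z) ∨ (g x < g z ∧ g y < g z) ∨ (h x < h z ∧ h y < h z))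
    (hPf : Climbs E f g h I) (hPg : Climbs E g f h I) (hPh : Climbs E h f g I)
    (D : V) (hD : I D) :
    ∀ n u, h u ≤ n → (I u ∨ ∀ y, f y ≤ f u) → f u < f D → g D < g u → h D < h u →
      ReflTransGen (DecStep E h) u D ∨ ReflTransGen (DecStep E g) u D := by
  intro n
  induction n with
  | zero => intro u h1 _ _ _ h2; omega
  | succ n ih =>
    intro u hn hIu hfu hgu hhu
    have hu : I u := hIu.resolve_right fun hm => by have := hm D; omega
    obtain ⟨v, hE, hf₁, hg₁, hh₁, hI₁⟩ := hPf u hu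
    suffices hs : ReflTransGen (DecStep E h) v D ∨ ReflTransGen (DecStep E g) v D from
      hs.imp (ReflTransGen.head ⟨hE, hh₁⟩) (ReflTransGen.head ⟨hE, hg₁⟩)
    rcases eq_or_ne v D with rfl | hne
    · exact .inl .refl
    have hf₂ : f v < f D := by
      rcases hb u v D hE (by rintro rfl; omega) hne.symm with h' | h' | h' <;> omega
    rcases lt_or_gt_of_ne (hg.ne hne) with hgv | hgv
    · left
      have hhv : h D < h v := by
        have := ha v D hne
        have := hh.ne hne
        omega
      exact greedy_zigzag E f g h I hsym hf hg hh ha hb hPf hPh _ v D le_rfl hhv hf₂ hI₁ (.inl hD)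
        (.inr ⟨hgv, u, hE, hgu⟩)
    · rcases lt_or_gt_of_ne (hh.ne hne) with hhv | hhv
      · -- the mirror image: the roles of `g` and `h` are exchanged
        right
        refine greedy_zigzag E f h g I hsym hf hh hg (fun x y hxy => ?_) (fun x y z h1 h2 h3 => ?_)
          (fun x hx => ?_) hPg _ v D le_rfl hgv hf₂ hI₁ (.inl hD) (.inr ⟨hhv, u, hE, hhu⟩)
        · have := ha x y hxy
          tauto
        · have := hb x y z h1 h2 h3
          tauto
        · obtain ⟨y, h1, h2, h3, h4, h5⟩ := hPf x hx
          exact ⟨y, h1, h2, h4, h3, h5⟩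
      · exact ih v (by omega) hI₁ hf₂ hgv hhv

lemma exists_fin_path {V : Type*} {r : V → V → Prop} {a b : V} (hab : ReflTransGen r a b) :
    ∃ (m : ℕ) (p : Fin (m + 1) → V), p 0 = a ∧ p (Fin.last m) = b ∧
      ∀ k : Fin m, r (p k.castSucc) (p k.succ) := by
  induction hab with
  | refl => exact ⟨0, fun _ => a, rfl, rfl, fun k => k.elim0⟩
  | @tail b c _ hbc ih =>
    obtain ⟨m, p, h0, hl, hs⟩ := ih
    refine ⟨m + 1, Fin.snoc p c, ?_, by simp, fun k => ?_⟩
    · rw [← Fin.castSucc_zero, Fin.snoc_castSucc, h0]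
    · induction k using Fin.lastCases with
      | last => simpa [hl] using hbc
      | cast k => rw [Fin.succ_castSucc, Fin.snoc_castSucc, Fin.snoc_castSucc]; exact hs k

lemma exists_rank {V : Type*} [Fintype V] (r : V → V → Prop) (hr : IsStrictTotalOrder V r) :
    ∃ f : V → ℕ, f.Injective ∧ ∀ x y, r x y ↔ f x < f y := by
  classical
  have mono : ∀ x y, r x y →
      (Finset.univ.filter fun z => r z x).card < (Finset.univ.filter fun z => r z y).card := by
    intro x y hxy
    refine Finset.card_lt_card (Finset.ssubset_iff_of_subset ?_ |>.2 ⟨x, ?_, ?_⟩)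
    · intro z hz
      simp only [Finset.mem_filter, Finset.mem_univ, true_and] at hz ⊢
      exact _root_.trans hz hxy
    · simpa using hxy
    · simpa using irrefl_of r x
  refine ⟨fun x => (Finset.univ.filter fun z => r z x).card, fun x y hxy => ?_, fun x y => ?_⟩
  · rcases trichotomous_of r x y with h | h | h
    · exact absurd hxy (mono _ _ h).ne
    · exact h
    · exact absurd hxy (mono _ _ h).ne'
  · refine ⟨mono x y, fun hxy => ?_⟩
    rcases trichotomous_of r x y with h | h | h
    · exact h
    · subst h
      exact absurd hxy (lt_irrefl _)
    · exact absurd hxy (mono _ _ h).le.not_gt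

lemma SectOdd.lt_iff {V : Type*} {lt : Fin 3 → V → V → Prop} {i : Fin 3} {u v : V} :
    SectOdd lt i u v ↔ lt i u v ∧ ∀ j, j ≠ i → lt j v u := by
  fin_cases i <;> simp [SectOdd, Sect1, Sect3, Sect5, Fin.forall_fin_succ] <;> tauto

theorem stmt_18 {V : Type*} [Fintype V] (E : V → V → Prop) (lt : Fin 3 → V → V → Prop)
    (hsym : ∀ x y : V, E x y → E y x)
    (hlt : ∀ i, IsStrictTotalOrder V (lt i))
    (ha : ∀ x y : V, x ≠ y → ¬ ∀ i, lt i x y)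
    (hb : ∀ x y z : V, E x y → z ≠ x → z ≠ y → ∃ i, lt i x z ∧ lt i y z)
    (A : Fin 3 → V) (hAinj : Function.Injective A)
    (hAadj : ∀ i j : Fin 3, i ≠ j → E (A i) (A j))
    (hAmax : ∀ i : Fin 3, ∀ x : V, x ≠ A i → lt i x (A i))
    (hAmin : ∀ i j : Fin 3, i ≠ j → ∀ x : V, (∀ k, x ≠ A k) → lt i (A j) x)
    (hmaxi : ∀ x : V, (∀ k, x ≠ A k) → ∀ i : Fin 3, ∃ v, E x v ∧ SectOdd lt i x v)
    (u D : V) (huD : u ≠ D) :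
    ∃ (m : ℕ) (p : Fin (m + 1) → V), p 0 = u ∧ p (Fin.last m) = D ∧
      (∀ k : Fin m, E (p k.castSucc) (p k.succ)) ∧
      (∃ i : Fin 3,
        (∀ j k : Fin (m + 1), j < k → lt i (p j) (p k)) ∨
        (∀ j k : Fin (m + 1), j < k → lt i (p k) (p j))) := by
  choose f hinj hf using fun i => exists_rank (lt i) (hlt i)
  simp only [hf] at ha hb hAmax hAmin ⊢
  replace hmaxi : ∀ x : V, (∀ k, x ≠ A k) → ∀ i : Fin 3,
      ∃ v, E x v ∧ f i x < f i v ∧ ∀ j, j ≠ i → f j v < f j x := by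
    intro x hx i
    obtain ⟨v, hE, hs⟩ := hmaxi x hx i
    simp only [SectOdd.lt_iff, hf] at hs
    exact ⟨v, hE, hs⟩
  -- a decreasing path in either direction suffices, since `E` is symmetric
  suffices key : ∃ i, ReflTransGen (DecStep E (f i)) u D ∨ ReflTransGen (DecStep E (f i)) D u by
    obtain ⟨i, hi | hi⟩ := key
    · obtain ⟨m, p, h0, hl, hs⟩ := exists_fin_path hi
      refine ⟨m, p, h0, hl, fun k => (hs k).1, i, .inr fun j k hjk => ?_⟩
      have hanti : StrictAnti fun k => f i (p k) := Fin.strictAnti_iff_succ_lt.2 fun k => (hs k).2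
      exact hanti hjk
    · obtain ⟨m, p, h0, hl, hs⟩ := exists_fin_path (reflTransGen_swap.2 hi)
      refine ⟨m, p, h0, hl, fun k => hsym _ _ (hs k).1, i, .inl fun j k hjk => ?_⟩
      have hmono : StrictMono fun k => f i (p k) := Fin.strictMono_iff_lt_succ.2 fun k => (hs k).2
      exact hmono hjk
  have toA : ∀ k n x, f (k + 1) x ≤ n → x ≠ A k → ReflTransGen (DecStep E (f k)) (A k) x := by
    intro k n
    induction n with
    | zero =>
      intro x hx hxk
      by_cases hint : ∀ l, x ≠ A l
      · obtain ⟨v, -, -, hv⟩ := hmaxi x hint k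
        have := hv (k + 1) (by simp)
        omega
      · push Not at hint
        obtain ⟨l, rfl⟩ := hint
        exact .single ⟨hAadj k l fun h => hxk (h ▸ rfl), hAmax k _ hxk⟩
    | succ n ih =>
      intro x hx hxk
      by_cases hint : ∀ l, x ≠ A l
      · obtain ⟨v, hE, hv₁, hv₂⟩ := hmaxi x hint k
        have hv₃ := hv₂ (k + 1) (by simp)
        refine ReflTransGen.tail (b := v) ?_ ⟨hsym _ _ hE, hv₁⟩
        by_cases hvA : v = A k
        · rw [hvA]
        · exact ih v (by omega) hvA
      · push Not at hint
        obtain ⟨l, rfl⟩ := hint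
        exact .single ⟨hAadj k l fun h => hxk (h ▸ rfl), hAmax k _ hxk⟩
  by_cases hu : ∀ k, u ≠ A k
  swap
  · push Not at hu
    obtain ⟨k, rfl⟩ := hu
    exact ⟨k, .inl (toA k _ D le_rfl huD.symm)⟩
  by_cases hD : ∀ k, D ≠ A k
  swap
  · push Not at hD
    obtain ⟨k, rfl⟩ := hD
    exact ⟨k, .inr (toA k _ u le_rfl huD)⟩
  have climb : ∀ i j k : Fin 3, j ≠ i → k ≠ i →
      Climbs E (f i) (f j) (f k) (fun x => ∀ l, x ≠ A l) := by
    intro i j k hji hki x hx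
    obtain ⟨v, hE, hv₁, hv₂⟩ := hmaxi x hx i
    refine ⟨v, hE, hv₁, hv₂ j hji, hv₂ k hki, ?_⟩
    by_cases hvi : v = A i
    · right
      intro y
      rcases eq_or_ne y (A i) with rfl | hy
      · rw [hvi]
      · rw [hvi]
        exact (hAmax i y hy).le
    · left
      rintro l rfl
      have := hAmin i l (fun h => hvi (h ▸ rfl)) x hx
      omega
  have odd : ∀ i j k : Fin 3, i ≠ j → i ≠ k → j ≠ k → ∀ x y : V, (∀ l, x ≠ A l) → (∀ l, y ≠ A l) →
      f i x < f i y → f j y < f j x → f k y < f k x →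
      ∃ i, ReflTransGen (DecStep E (f i)) x y := by
    intro i j k hij hik hjk x y hx hy h1 h2 h3
    have hall : ∀ l, l = i ∨ l = j ∨ l = k := by omega
    refine (greedy_of_odd_sector E (f i) (f j) (f k) (fun x => ∀ l, x ≠ A l) hsym
      (hinj i) (hinj j) (hinj k) (fun a b hab hc => ha a b hab fun l => ?_)
      (fun a b c hab hca hcb => ?_) (climb i j k hij.symm hik.symm) (climb j i k hij hjk.symm)
      (climb k i j hik hjk) y hy _ x le_rfl (.inl hx) h1 h2 h3).elim
      (fun h => ⟨k, h⟩) (fun h => ⟨j, h⟩)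
    · rcases hall l with rfl | rfl | rfl
      exacts [hc.1, hc.2.1, hc.2.2]
    · obtain ⟨l, hl⟩ := hb a b c hab hca hcb
      rcases hall l with rfl | rfl | rfl
      exacts [.inl hl, .inr (.inl hl), .inr (.inr hl)]
  have odd' : ∀ i j k : Fin 3, i ≠ j → i ≠ k → j ≠ k →
      ((f i u < f i D ∧ f j D < f j u ∧ f k D < f k u) ∨
        (f i D < f i u ∧ f j u < f j D ∧ f k u < f k D)) →
      ∃ i, ReflTransGen (DecStep E (f i)) u D ∨ ReflTransGen (DecStep E (f i)) D u := by
    rintro i j k hij hik hjk (⟨h1, h2, h3⟩ | ⟨h1, h2, h3⟩)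
    · exact (odd i j k hij hik hjk u D hu hD h1 h2 h3).imp fun _ => .inl
    · exact (odd i j k hij hik hjk D u hD hu h1 h2 h3).imp fun _ => .inr
  have ha₁ := ha u D huD
  have ha₂ := ha D u huD.symm
  simp only [Fin.forall_fin_succ, Fin.forall_fin_zero, Fin.succ_zero_eq_one, Fin.succ_one_eq_two,
    and_true] at ha₁ ha₂
  have n0 := (hinj 0).ne huD
  have n1 := (hinj 1).ne huD
  have n2 := (hinj 2).ne huD
  -- the signs of `D - u` in the three orders are not all equal, so exactly one is isolated
  by_cases c0 : (f 0 u < f 0 D ∧ f 1 D < f 1 u ∧ f 2 D < f 2 u) ∨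
      (f 0 D < f 0 u ∧ f 1 u < f 1 D ∧ f 2 u < f 2 D)
  · exact odd' 0 1 2 (by decide) (by decide) (by decide) c0
  by_cases c1 : (f 1 u < f 1 D ∧ f 0 D < f 0 u ∧ f 2 D < f 2 u) ∨
      (f 1 D < f 1 u ∧ f 0 u < f 0 D ∧ f 2 u < f 2 D)
  · exact odd' 1 0 2 (by decide) (by decide) (by decide) c1
  exact odd' 2 0 1 (by decide) (by decide) (by decide) (by omega)
end
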